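/- Let n ≥ 2, k ≥ 1 and R ≥ 1 be integers with n^k·(n−1) dividing R. Then there exists an n-server PIR scheme for a database of k records of R bits each in which each server stores the entire kR-bit database (so the total storage is nkR bits), each query set Q_r consists of bit strings of length k·⌈log₂ n⌉ (so the upload complexity is n·k·⌈log₂ n⌉), and each server responds with exactly (n^k − 1)·R/(n^k·(n−1)) bits to every query, so that the download complexity is (1 − 1/n^k)·(n/(n−1))·R. -/

import Mathlib

open scoped ENNReal

/-- An `n`-server PIR scheme for a database of `k` records of `R` bits each. -/
structure PIRScheme (n k R : ℕ) where
  /-- The query set for each server. -/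
  Q : Fin n → Type
  /-- Each query set is finite. -/
  fintypeQ : ∀ r, Fintype (Q r)
  /-- The storage size (in bits) of each server. -/
  s : Fin n → ℕ
  /-- The encoding map of each server. -/
  E : (r : Fin n) → (Fin k → Fin R → Bool) → (Fin (s r) → Bool)
  /-- For each record index `ℓ`, a probability distribution on query tuples. -/
  D : Fin k → PMF ((r : Fin n) → Q r)
  /-- The response length of each server on each query. -/
  d : (r : Fin n) → Q r → ℕ
  /-- The deterministic response map of each server. -/
  resp : (r : Fin n) → (q : Q r) → (Fin (s r) → Bool) → (Fin (d r q) → Bool)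
  /-- The reconstruction function. -/
  recon : (ℓ : Fin k) → (q : (r : Fin n) → Q r) →
    ((r : Fin n) → (Fin (d r (q r)) → Bool)) → (Fin R → Bool)
  /-- Correctness. -/
  correct : ∀ (X : Fin k → Fin R → Bool) (ℓ : Fin k) (q : (r : Fin n) → Q r),
    q ∈ (D ℓ).support →
    recon ℓ q (fun r => resp r (q r) (E r X)) = X ℓ
  /-- Privacy: the marginal of each query component does not depend on `ℓ`. -/
  privacy : ∀ (r : Fin n) (ℓ ℓ' : Fin k),
    (D ℓ).map (fun q => q r) = (D ℓ').map (fun q => q r)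

attribute [instance] PIRScheme.fintypeQ

/-- A query tuple is possible if it lies in the support of `D ℓ` for some `ℓ`. -/
def PIRScheme.Possible {n k R : ℕ} (S : PIRScheme n k R)
    (q : (r : Fin n) → S.Q r) : Prop :=
  ∃ ℓ, q ∈ (S.D ℓ).support

/-- The download complexity: the maximum, over possible query tuples, of the
total number of downloaded bits. -/
noncomputable def PIRScheme.downloadComplexity {n k R : ℕ} (S : PIRScheme n k R) : ℕ :=
  letI : DecidablePred S.Possible := Classical.decPred _
  (Finset.univ.filter S.Possible).sup (fun q => ∑ r, S.d r (q r))

/-!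
Label the servers by a finite abelian group `G` of order `n`. Cut every record into segments indexed
by `(t, b)` with `t : ι → G` and `b : G`, the segments with `b = 0` being zero. A server asked for
`v` returns, for every `u`, the sum over `i` of segment `(u - v, u i)` of record `i`. To retrieve
record `l`, the queries agree outside coordinate `l`, where they run through all of `G`; each of
them alone is uniformly distributed. For fixed `t`, the answers of the servers at `u = v + t` differ
only in the summand of record `l`, which runs through all segments `(t, b)`; subtracting the one
with `b = 0` leaves the segment itself. The answer at `u = 0` is a sum of zero segments and is not
sent, which saves the factor `1 - 1 / n ^ k`.
-/

section ExtendZero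

variable {α A : Type*} [Zero α] [Zero A]

/-- The extension by `0` of a function on the nonzero elements to all elements: it restores the
segments and answers that are zero by convention and hence neither stored nor sent. -/
noncomputable def extendZero (f : {x : α // x ≠ 0} → A) : α → A :=
  Function.extend Subtype.val f 0

theorem extendZero_zero (f : {x : α // x ≠ 0} → A) : extendZero f 0 = 0 :=
  Function.extend_apply' _ _ _ fun ⟨x, hx⟩ => x.2 hx

theorem extendZero_coe (f : {x : α // x ≠ 0} → A) (x : {x : α // x ≠ 0}) :
    extendZero f x = f x :=
  Subtype.val_injective.extend_apply f 0 x

theorem extendZero_restrict {f : α → A} (hf : f 0 = 0) :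
    extendZero (fun x : {x : α // x ≠ 0} => f x) = f := by
  funext x
  by_cases hx : x = 0
  · rw [hx, extendZero_zero, hf]
  · exact extendZero_coe _ ⟨x, hx⟩

end ExtendZero

section Answer

variable {ι G A : Type*} [Fintype ι] [AddCommGroup G] [AddCommGroup A]

/-- Component `u` of the answer to the query `v`, where `W i t b` is segment `(t, b)` of
record `i`. -/
def answer (W : ι → (ι → G) → G → A) (v u : ι → G) : A :=
  ∑ i, W i (u - v) (u i)

theorem answer_apply_zero {W : ι → (ι → G) → G → A} (hW : ∀ i t, W i t 0 = 0) (v : ι → G) :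
    answer W v 0 = 0 :=
  Finset.sum_eq_zero fun i _ => hW i _

theorem answer_sub_answer (W : ι → (ι → G) → G → A) {v w : ι → G} {l : ι}
    (hvw : ∀ i, i ≠ l → v i = w i) (t : ι → G) :
    answer W v (v + t) - answer W w (w + t) = W l t (v l + t l) - W l t (w l + t l) := by
  simp only [answer, add_sub_cancel_left, Pi.add_apply, ← Finset.sum_sub_distrib]
  refine Fintype.sum_eq_single l fun i hi => ?_
  rw [hvw i hi, sub_self]

variable [DecidableEq ι]

/-- Segment `(t, b)` of record `l`, computed from the answers `F g` to the queries
`a + Pi.single l g`. The servers used are those whose query `v` satisfies `(v + t) l = b` and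
`(v + t) l = 0`. -/
def retrieve (l : ι) (a : ι → G) (F : G → (ι → G) → A) (t : ι → G) (b : G) : A :=
  let component (g : G) : A := F g (a + Pi.single l g + t)
  component (b - a l - t l) - component (-a l - t l)

theorem retrieve_answer {W : ι → (ι → G) → G → A} (hW : ∀ i t, W i t 0 = 0) (l : ι)
    (a t : ι → G) (b : G) :
    retrieve l a (fun g => answer W (a + Pi.single l g)) t b = W l t b := by
  have agree (g h : G) (i : ι) (hi : i ≠ l) :
      (a + Pi.single l g : ι → G) i = (a + Pi.single l h : ι → G) i := by
    simp only [Pi.add_apply, Pi.single_eq_of_ne hi]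
  have coord (c : G) : (a + Pi.single l (c - a l - t l) : ι → G) l + t l = c := by
    rw [Pi.add_apply, Pi.single_eq_same]
    abel
  simp only [retrieve, answer_sub_answer W (agree _ _)]
  rw [coord, ← zero_sub (a l), coord, hW, sub_zero]

end Answer

section QueryDistribution

theorem map_equiv_uniformOfFintype {α β : Type*} [Fintype α] [Nonempty α] [Fintype β] [Nonempty β]
    (e : α ≃ β) : (PMF.uniformOfFintype α).map e = PMF.uniformOfFintype β := by
  ext b
  rw [PMF.map_apply, tsum_eq_single (e.symm b)]
  · simp [Fintype.card_congr e]
  · rintro a ha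
    rw [if_neg]
    rintro rfl
    exact ha (e.symm_apply_apply a).symm

variable {ι G S Q : Type*} [Fintype ι] [DecidableEq ι] [AddCommGroup G] [Fintype G]

/-- The distribution of the query tuple for record `l`: a uniformly random vector `a`, shifted in
coordinate `l` by the label `σ r` of each server `r`, and encoded by `enc`. -/
noncomputable def queryDist (σ : S → G) (enc : (ι → G) → Q) (l : ι) : PMF (S → Q) :=
  (PMF.uniformOfFintype (ι → G)).map fun a r => enc (a + Pi.single l (σ r))

theorem map_eval_queryDist (σ : S → G) (enc : (ι → G) → Q) (l : ι) (r : S) :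
    (queryDist σ enc l).map (fun q => q r) = (PMF.uniformOfFintype (ι → G)).map enc := by
  rw [← map_equiv_uniformOfFintype (Equiv.addRight (Pi.single l (σ r))), PMF.map_comp, queryDist,
    PMF.map_comp]
  rfl

end QueryDistribution

namespace PIRScheme

section Construction

variable {n k R L m : ℕ} {G A : Type*} [AddCommGroup G] [AddCommGroup A]
  (split : (Fin R → Bool) ≃ ((Fin k → G) × {b : G // b ≠ 0} → A))
  (pack : (Fin m → Bool) ≃ ({u : Fin k → G // u ≠ 0} → A))

/-- Segment `(t, b)` of record `i`: the records hold the segments with `b ≠ 0`, and those with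
`b = 0` are zero. -/
noncomputable def recordSegment (X : Fin k → Fin R → Bool) (i : Fin k) (t : Fin k → G) : G → A :=
  extendZero fun b => split (X i) (t, b)

/-- The bits sent in reply to the query `v`: the answer without its component `u = 0`, which
always vanishes. -/
noncomputable def response (X : Fin k → Fin R → Bool) (v : Fin k → G) : Fin m → Bool :=
  pack.symm fun u => answer (recordSegment split X) v u

theorem extendZero_pack_response (X : Fin k → Fin R → Bool) (v : Fin k → G) :
    extendZero (pack (response split pack X v)) = answer (recordSegment split X) v := by
  rw [response, Equiv.apply_symm_apply]
  exact extendZero_restrict (answer_apply_zero (fun _ _ => extendZero_zero _) v)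

variable (σ : Fin n ≃ G) (enc : (Fin k → G) ↪ (Fin L → Bool))

/-- Reconstruction of record `l` from the query tuple `q` and the replies `c`. The random vector is
read off the query to the server with label `0`. -/
noncomputable def reconstruct (l : Fin k) (q : Fin n → Fin L → Bool) (c : Fin n → Fin m → Bool) :
    Fin R → Bool :=
  let a := Function.invFun enc (q (σ.symm 0))
  split.symm fun tb =>
    retrieve l a (fun g => extendZero (pack (c (σ.symm g)))) tb.1 tb.2

theorem reconstruct_response (X : Fin k → Fin R → Bool) (l : Fin k) (a : Fin k → G) :
    reconstruct split pack σ enc l (fun r => enc (a + Pi.single l (σ r)))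
      (fun r => response split pack X (a + Pi.single l (σ r))) = X l := by
  have decode_enc : Function.invFun enc (enc a) = a := Function.leftInverse_invFun enc.injective a
  simp only [reconstruct, extendZero_pack_response, Equiv.apply_symm_apply, Pi.single_zero,
    add_zero, decode_enc,
    retrieve_answer (W := recordSegment split X) (fun _ _ => extendZero_zero _)]
  simp only [recordSegment, extendZero_coe, Prod.mk.eta, Equiv.symm_apply_apply]

/-- The PIR scheme with servers labelled by `σ`, segments given by `split`, replies transmitted as
bits by `pack` and queries by `enc`. -/
noncomputable def ofGroup [Fintype G] : PIRScheme n k R where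
  Q _ := Fin L → Bool
  fintypeQ _ := inferInstance
  s _ := k * R
  E _ X p := X (finProdFinEquiv.symm p).1 (finProdFinEquiv.symm p).2
  D := queryDist σ enc
  d _ _ := m
  resp _ q Y := response split pack (fun i x => Y (finProdFinEquiv (i, x))) (Function.invFun enc q)
  recon := reconstruct split pack σ enc
  correct X l q hq := by
    obtain ⟨a, -, rfl⟩ := (PMF.mem_support_map_iff _ _ _).mp hq
    simp only [Equiv.symm_apply_apply, Function.leftInverse_invFun enc.injective _]
    exact reconstruct_response split pack σ enc X l a
  privacy r l l' := by rw [map_eval_queryDist, map_eval_queryDist]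

end Construction

theorem downloadComplexity_eq_of_forall_d_eq {n k R c : ℕ} (S : PIRScheme n k R) (hk : 0 < k)
    (hd : ∀ r q, S.d r q = c) : S.downloadComplexity = n * c := by
  obtain ⟨q, hq⟩ := (S.D ⟨0, hk⟩).support_nonempty
  simp only [downloadComplexity, hd, Finset.sum_const, Finset.card_univ, Fintype.card_fin,
    smul_eq_mul]
  exact Finset.sup_const ⟨q, by simpa using ⟨_, hq⟩⟩ _

end PIRScheme

theorem nonempty_bits_equiv_fun {β A : Type*} [Finite β] {N m : ℕ}
    (hA : Nat.card A = 2 ^ m) (hN : N = Nat.card β * m) : Nonempty ((Fin N → Bool) ≃ (β → A)) := by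
  have : Finite A := Nat.finite_of_card_ne_zero (by simp [hA])
  refine Finite.card_eq.mp ?_
  rw [Nat.card_fun, Nat.card_fun, hA, hN, ← pow_mul, mul_comm m]
  simp

theorem nonempty_embedding_bits (G : Type*) [Fintype G] (k : ℕ) :
    Nonempty ((Fin k → G) ↪ (Fin (k * Nat.clog 2 (Fintype.card G)) → Bool)) := by
  refine Function.Embedding.nonempty_of_card_le ?_
  calc Fintype.card (Fin k → G) = Fintype.card G ^ k := by simp
    _ ≤ (2 ^ Nat.clog 2 (Fintype.card G)) ^ k :=
      Nat.pow_le_pow_left (Nat.le_pow_clog one_lt_two _) k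
    _ = Fintype.card (Fin (k * Nat.clog 2 (Fintype.card G)) → Bool) := by
      simp [← pow_mul, mul_comm]

theorem card_subtype_ne {α : Type*} [Finite α] (a : α) :
    Nat.card {x : α // x ≠ a} = Nat.card α - 1 := by
  classical
  have := Fintype.ofFinite α
  simp [Fintype.card_subtype_compl]

/-- Construction 6 / Theorem 11 of the paper. For `n ≥ 2` with
`n^k·(n-1) ∣ R` there is an `n`-server PIR scheme for `k` records of `R` bits each
in which every server stores the whole `kR`-bit database (total storage `nkR`),
every query is a bit string of length `k⌈log₂ n⌉` (upload complexity `nk⌈log₂ n⌉`),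
and every server responds with exactly `(n^k - 1)·R/(n^k·(n-1))` bits to every
query, so the download complexity is `(1 - 1/n^k)·(n/(n-1))·R`. -/
theorem construction_six (n k R : ℕ) (hn : 2 ≤ n) (hk : 1 ≤ k) (hR : 1 ≤ R)
    (hdvd : n ^ k * (n - 1) ∣ R) :
    ∃ S : PIRScheme n k R,
      (∀ r, S.s r = k * R) ∧
      (∑ r, S.s r = n * (k * R)) ∧
      (∀ r, S.Q r = (Fin (k * Nat.clog 2 n) → Bool)) ∧
      (∀ r q, S.d r q = (n ^ k - 1) * (R / (n ^ k * (n - 1)))) ∧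
      S.downloadComplexity = n * ((n ^ k - 1) * (R / (n ^ k * (n - 1)))) := by
  have : NeZero n := ⟨by omega⟩
  obtain ⟨m, hm⟩ := hdvd
  have hdiv : R / (n ^ k * (n - 1)) = m :=
    Nat.div_eq_of_eq_mul_right (Nat.mul_pos (pow_pos (by omega) k) (by omega)) hm
  have card_vec : Nat.card (Fin k → ZMod n) = n ^ k := by simp
  have card_bits : Nat.card (Fin m → ZMod 2) = 2 ^ m := by simp
  obtain ⟨split⟩ := nonempty_bits_equiv_fun (N := R)
    (β := (Fin k → ZMod n) × {b : ZMod n // b ≠ 0}) card_bits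
    (by rw [Nat.card_prod, card_vec, card_subtype_ne, Nat.card_zmod, hm])
  obtain ⟨pack⟩ := nonempty_bits_equiv_fun (β := {u : Fin k → ZMod n // u ≠ 0}) card_bits
    (by rw [card_subtype_ne, card_vec, ← hdiv])
  obtain ⟨enc⟩ := nonempty_embedding_bits (ZMod n) k
  rw [ZMod.card] at enc
  let S := PIRScheme.ofGroup split pack (ZMod.finEquiv n).toEquiv enc
  exact ⟨S, fun _ => rfl, by simp [S, PIRScheme.ofGroup], fun _ => rfl, fun _ _ => rfl,
    S.downloadComplexity_eq_of_forall_d_eq hk fun _ _ => rfl⟩
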